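/- For any m ≥ 1 there exist two spherical harmonics u_1, u_2 of degree m on S^2 whose set of common zeros consists of exactly 2m points. -/

import Mathlib

open MvPolynomial

namespace Stmt16

/-- real and imaginary part of `(x+iy)^n` -/
noncomputable def RI : ℕ → MvPolynomial (Fin 3) ℝ × MvPolynomial (Fin 3) ℝ
  | 0 => (1, 0)
  | n + 1 => (X 0 * (RI n).1 - X 1 * (RI n).2, X 0 * (RI n).2 + X 1 * (RI n).1)

lemma RI_hom (n : ℕ) : (RI n).1.IsHomogeneous n ∧ (RI n).2.IsHomogeneous n := by
  induction n with
  | zero => exact ⟨isHomogeneous_one _ _, isHomogeneous_zero _ _ _⟩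
  | succ n ih =>
    obtain ⟨h1, h2⟩ := ih
    have hx (i : Fin 3) := isHomogeneous_X ℝ i
    rw [add_comm n 1]
    have e1 := ((hx 0).mul h1).sub ((hx 1).mul h2)
    have e2 := ((hx 0).mul h2).add ((hx 1).mul h1)
    rw [add_comm 1 n] at *
    exact ⟨e1, e2⟩

lemma RI_CR (n : ℕ) : pderiv 0 (RI n).1 = pderiv 1 (RI n).2 ∧
    pderiv 1 (RI n).1 = - pderiv 0 (RI n).2 ∧ pderiv 2 (RI n).1 = 0 ∧ pderiv 2 (RI n).2 = 0 := by
  induction n with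
  | zero => simp [RI]
  | succ n ih =>
    obtain ⟨h1, h2, h3, h4⟩ := ih
    have a01 : pderiv (0 : Fin 3) (X 1 : MvPolynomial (Fin 3) ℝ) = 0 := pderiv_X_of_ne (by decide)
    have a10 : pderiv (1 : Fin 3) (X 0 : MvPolynomial (Fin 3) ℝ) = 0 := pderiv_X_of_ne (by decide)
    have a20 : pderiv (2 : Fin 3) (X 0 : MvPolynomial (Fin 3) ℝ) = 0 := pderiv_X_of_ne (by decide)
    have a21 : pderiv (2 : Fin 3) (X 1 : MvPolynomial (Fin 3) ℝ) = 0 := pderiv_X_of_ne (by decide)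
    simp only [RI, map_sub, map_add, pderiv_mul, pderiv_X_self, a01, a10, a20, a21, h1, h2, h3, h4]
    refine ⟨?_, ?_, ?_, ?_⟩ <;> ring

lemma pd_comm (i j : Fin 3) (p : MvPolynomial (Fin 3) ℝ) :
    pderiv i (pderiv j p) = pderiv j (pderiv i p) := by
  have h : ⁅pderiv (R := ℝ) i, pderiv (R := ℝ) j⁆ = 0 := by
    apply MvPolynomial.derivation_ext
    intro k
    rw [Derivation.commutator_apply]
    simp only [pderiv_X, Pi.single_apply]
    split_ifs <;> simp
  have := congrArg (fun D => D p) h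
  simpa [Derivation.commutator_apply, sub_eq_zero] using this

lemma RI_lap (n : ℕ) : (∑ i, pderiv i (pderiv i (RI n).1)) = 0 ∧
    (∑ i, pderiv i (pderiv i (RI n).2)) = 0 := by
  obtain ⟨h1, h2, h3, h4⟩ := RI_CR n
  simp only [Fin.sum_univ_three]
  have h5 : pderiv 0 (RI n).2 = - pderiv 1 (RI n).1 := by rw [h2, neg_neg]
  constructor
  · rw [h1, h2, h3, map_neg, pd_comm 0 1]; simp
  · rw [h5, ← h1, h4, map_neg, pd_comm 0 1]; simp

lemma lap_zI (n : ℕ) : (∑ i, pderiv i (pderiv i (X 2 * (RI n).2))) = 0 := by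
  obtain ⟨h1, h2, h3, h4⟩ := RI_CR n
  have h := (RI_lap n).2
  have a02 : pderiv (0 : Fin 3) (X 2 : MvPolynomial (Fin 3) ℝ) = 0 := pderiv_X_of_ne (by decide)
  have a12 : pderiv (1 : Fin 3) (X 2 : MvPolynomial (Fin 3) ℝ) = 0 := pderiv_X_of_ne (by decide)
  simp only [Fin.sum_univ_three, h4, map_zero, add_zero] at h
  simp only [Fin.sum_univ_three, pderiv_mul, map_add, a02, a12, h4, pderiv_X_self, zero_mul,
    mul_zero, map_zero, zero_add, add_zero, pderiv_one]
  rw [← mul_add, h, mul_zero]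

lemma RI_eval (n : ℕ) (v : Fin 3 → ℝ) :
    eval v (RI n).1 = ((⟨v 0, v 1⟩ : ℂ) ^ n).re ∧ eval v (RI n).2 = ((⟨v 0, v 1⟩ : ℂ) ^ n).im := by
  induction n with
  | zero => simp [RI]
  | succ n ih =>
    simp only [RI, pow_succ', Complex.mul_re, Complex.mul_im, map_sub, map_add, map_mul, eval_X, ih,
      and_self]

/-- key algebraic equivalence -/
lemma key (n : ℕ) (w : ℂ) (z : ℝ) (h : w ≠ 0 ∨ z ≠ 0) :
    ((w ^ (n+1)).im = 0 ∧ z * (w ^ n).im + (w ^ (n+1)).re = 0) ↔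
      (z ≠ 0 ∧ (1 + 2 * Complex.I * w / z) ^ (n+1) = 1) := by
  by_cases hw : w = 0
  · subst hw
    have hz : z ≠ 0 := by simpa using h
    rcases n with _ | n <;> simp [hz]
  have hc : (starRingEnd ℂ) w ≠ 0 := by simpa using hw
  have hN : w.re * w.re + w.im * w.im ≠ 0 := by
    have := (Complex.normSq_pos.2 hw).ne'
    rwa [Complex.normSq_apply] at this
  have hroot : (w / (starRingEnd ℂ) w) ^ (n+1) = 1 ↔ (w ^ (n+1)).im = 0 := by
    rw [div_pow, div_eq_one_iff_eq (pow_ne_zero _ hc), ← map_pow, eq_comm, Complex.conj_eq_iff_im]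
  have hzeta : z ≠ 0 → z * w.im = w.re * w.re + w.im * w.im →
      1 + 2 * Complex.I * w / z = w / (starRingEnd ℂ) w := by
    intro hz e
    have hz' : (z : ℂ) ≠ 0 := by exact_mod_cast hz
    rw [eq_div_iff hc]
    field_simp
    apply Complex.ext <;> simp <;> nlinarith
  have hq : (w ^ (n+1)).im = 0 →
      (z * (w ^ n).im + (w ^ (n+1)).re = 0 ↔ z * w.im = w.re * w.re + w.im * w.im) := by
    intro h0
    have hR : (w ^ (n+1)).re ≠ 0 := by
      intro hR
      exact pow_ne_zero (n+1) hw (Complex.ext hR h0)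
    have e1 : (w ^ n).im * (w.re * w.re + w.im * w.im) = - (w ^ (n+1)).re * w.im := by
      rw [pow_succ] at h0 ⊢
      simp only [Complex.mul_re, Complex.mul_im] at h0 ⊢
      linear_combination w.re * h0
    constructor
    · intro h1
      apply mul_left_cancel₀ hR
      linear_combination z * e1 - (w.re * w.re + w.im * w.im) * h1
    · intro h1
      apply mul_left_cancel₀ hN
      linear_combination z * e1 - (w ^ (n+1)).re * h1
  constructor
  · rintro ⟨h0, h1⟩
    have e := (hq h0).1 h1
    have hz : z ≠ 0 := by
      rintro rfl
      apply hN; linarith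
    exact ⟨hz, by rw [hzeta hz e]; exact hroot.2 h0⟩
  · rintro ⟨hz, h1⟩
    have hn : ‖1 + 2 * Complex.I * w / z‖ = 1 := Complex.norm_eq_one_of_pow_eq_one h1 (by simp)
    have e : z * w.im = w.re * w.re + w.im * w.im := by
      have h2 : Complex.normSq (1 + 2 * Complex.I * w / z) = 1 := by
        rw [Complex.normSq_eq_norm_sq, hn, one_pow]
      have h3 : 1 + 2 * Complex.I * w / z = (⟨1 - 2 * w.im / z, 2 * w.re / z⟩ : ℂ) := by
        apply Complex.ext <;> simp [Complex.div_ofReal_re, Complex.div_ofReal_im]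
        ring
      rw [h3, Complex.normSq_mk] at h2
      field_simp at h2
      nlinarith
    rw [hzeta hz e] at h1
    have h0 := hroot.1 h1
    exact ⟨h0, (hq h0).2 e⟩

lemma norm3 (x : EuclideanSpace ℝ (Fin 3)) : ‖x‖ = 1 ↔ x 0 ^ 2 + x 1 ^ 2 + x 2 ^ 2 = 1 := by
  rw [EuclideanSpace.norm_eq, Real.sqrt_eq_one]
  simp [Fin.sum_univ_three]

/-- scale factor -/
noncomputable def lam (t : ℂ × ℝ) : ℝ := t.2 / √(1 + (t.1.im / 2) ^ 2 + ((1 - t.1.re) / 2) ^ 2)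

noncomputable def F (t : ℂ × ℝ) : EuclideanSpace ℝ (Fin 3) :=
  !₂[lam t * (t.1.im / 2), lam t * ((1 - t.1.re) / 2), lam t]

lemma F0 (t) : F t 0 = lam t * (t.1.im / 2) := rfl
lemma F1 (t) : F t 1 = lam t * ((1 - t.1.re) / 2) := rfl
lemma F2 (t) : F t 2 = lam t := rfl

lemma zeta_formula (a b z : ℝ) (_ : z ≠ 0) :
    1 + 2 * Complex.I * (⟨a, b⟩ : ℂ) / z = (⟨1 - 2 * b / z, 2 * a / z⟩ : ℂ) := by
  apply Complex.ext <;> simp [Complex.div_ofReal_re, Complex.div_ofReal_im]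
  ring

lemma count (m : ℕ) (hm : 1 ≤ m) :
    {x : EuclideanSpace ℝ (Fin 3) | ‖x‖ = 1 ∧ x 2 ≠ 0 ∧
      (1 + 2 * Complex.I * (⟨x 0, x 1⟩ : ℂ) / (x 2 : ℝ)) ^ m = 1}.ncard = 2 * m := by
  classical
  let T : Finset (ℂ × ℝ) := Polynomial.nthRootsFinset m (1 : ℂ) ×ˢ {1, -1}
  have hT : T.card = 2 * m := by
    have h1 : (Polynomial.nthRootsFinset m (1 : ℂ)).card = m :=
      (Complex.isPrimitiveRoot_exp m (by omega)).card_nthRootsFinset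
    have h2 : ({1, -1} : Finset ℝ).card = 2 := Finset.card_pair (by norm_num)
    rw [Finset.card_product, h1, h2, mul_comm]
  have memT (t : ℂ × ℝ) : t ∈ T ↔ t.1 ^ m = 1 ∧ (t.2 = 1 ∨ t.2 = -1) := by
    simp [T, Finset.mem_product, Polynomial.mem_nthRootsFinset (show 0 < m by omega)]
  have hs (t : ℂ × ℝ) : 0 < √(1 + (t.1.im / 2) ^ 2 + ((1 - t.1.re) / 2) ^ 2) :=
    Real.sqrt_pos.2 (by positivity)
  have hlam (t : ℂ × ℝ) (ht : t ∈ T) : lam t ≠ 0 := by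
    have h2 : t.2 ≠ 0 := by
      rcases ((memT t).1 ht).2 with h | h <;> rw [h] <;> norm_num
    exact div_ne_zero h2 (hs t).ne'
  have hz (t : ℂ × ℝ) (ht : t ∈ T) :
      1 + 2 * Complex.I * (⟨F t 0, F t 1⟩ : ℂ) / (F t 2 : ℝ) = t.1 := by
    have := hlam t ht
    rw [zeta_formula _ _ _ (by rwa [F2]), F0, F1, F2]
    apply Complex.ext
    · simp only; field_simp; ring
    · simp only; field_simp
  rw [← hT, ← Set.ncard_coe_finset]
  symm
  apply Set.ncard_congr (fun t _ => F t)
  · intro t ht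
    have ht : t ∈ T := by simpa using ht
    refine ⟨?_, by rw [F2]; exact hlam t ht, ?_⟩
    · rw [norm3, F0, F1, F2]
      have e : t.2 ^ 2 = 1 := by
        rcases ((memT t).1 ht).2 with h | h <;> rw [h] <;> norm_num
      have hp : (0:ℝ) < 1 + (t.1.im / 2) ^ 2 + ((1 - t.1.re) / 2) ^ 2 := by positivity
      have e2 : lam t ^ 2 * (1 + (t.1.im / 2) ^ 2 + ((1 - t.1.re) / 2) ^ 2) = 1 := by
        rw [lam, div_pow, Real.sq_sqrt hp.le, e]
        exact one_div_mul_cancel hp.ne'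
      linear_combination e2
    · rw [hz t ht]; exact ((memT t).1 ht).1
  · intro t t' ht ht' h
    have ht : t ∈ T := by simpa using ht
    have ht' : t' ∈ T := by simpa using ht'
    have h1 : t.1 = t'.1 := by rw [← hz t ht, ← hz t' ht', h]
    have h2 : lam t = lam t' := by rw [← F2, ← F2, h]
    refine Prod.ext h1 ?_
    rw [lam, lam, h1] at h2
    exact (div_left_inj' (hs t').ne').1 h2
  · rintro x ⟨hx, hx2, hx3⟩
    rw [norm3] at hx
    rw [zeta_formula _ _ _ hx2] at hx3
    let t : ℂ × ℝ := (⟨1 - 2 * x 1 / x 2, 2 * x 0 / x 2⟩, x 2 / |x 2|)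
    have ha : |x 2| ≠ 0 := abs_ne_zero.2 hx2
    have hl : lam t = x 2 := by
      have : √(1 + (t.1.im / 2) ^ 2 + ((1 - t.1.re) / 2) ^ 2) = 1 / |x 2| := by
        rw [Real.sqrt_eq_iff_mul_self_eq (by positivity) (by positivity)]
        simp only [t]
        rw [div_mul_div_comm, abs_mul_abs_self]
        field_simp
        linear_combination 4 * hx
      rw [lam, this]
      simp only [t]
      field_simp
    refine ⟨t, ?_, ?_⟩
    · have : t ∈ T := by
        rw [memT]
        refine ⟨hx3, ?_⟩
        rcases lt_or_gt_of_ne hx2 with h | h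
        · right; simp only [t]; rw [abs_of_neg h]; field_simp
        · left; simp only [t]; rw [abs_of_pos h]; field_simp
      simpa using this
    · ext i
      fin_cases i
      · change F t 0 = x 0
        rw [F0, hl]; simp only [t]; field_simp
      · change F t 1 = x 1
        rw [F1, hl]; simp only [t]; field_simp; ring
      · change F t 2 = x 2
        rw [F2, hl]

end Stmt16

open Stmt16

/-- For any `m ≥ 1` there exist two spherical harmonics of degree `m` on `S²`
(i.e. restrictions to the unit sphere of homogeneous harmonic polynomials of
degree `m` in three variables) whose set of common zeros consists of exactly
`2m` points. -/
theorem stmt16 (m : ℕ) (hm : 1 ≤ m) :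
    ∃ p q : MvPolynomial (Fin 3) ℝ,
      p.IsHomogeneous m ∧ q.IsHomogeneous m ∧
      (∑ i, pderiv i (pderiv i p)) = 0 ∧ (∑ i, pderiv i (pderiv i q)) = 0 ∧
      {x : EuclideanSpace ℝ (Fin 3) | ‖x‖ = 1 ∧
        eval (fun i => x i) p = 0 ∧ eval (fun i => x i) q = 0}.ncard = 2 * m := by
  obtain ⟨n, rfl⟩ : ∃ n, m = n + 1 := ⟨m - 1, by omega⟩
  refine ⟨(RI (n+1)).2, X 2 * (RI n).2 + (RI (n+1)).1, (RI_hom _).2, ?_, (RI_lap _).2, ?_, ?_⟩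
  · refine IsHomogeneous.add ?_ (RI_hom _).1
    have := (isHomogeneous_X ℝ (2 : Fin 3)).mul (RI_hom n).2
    rwa [add_comm] at this
  · simp only [map_add, Finset.sum_add_distrib]
    rw [lap_zI, (RI_lap _).1, add_zero]
  · rw [← count (n+1) hm]
    congr 1
    ext x
    simp only [Set.mem_ofPred_eq, map_add, map_mul, eval_X, RI_eval]
    refine and_congr_right fun hx => ?_
    apply key
    by_contra! hcon
    obtain ⟨h1, h2⟩ := hcon
    rw [norm3] at hx
    have a := congrArg Complex.re h1
    have b := congrArg Complex.im h1
    simp only [Complex.zero_re, Complex.zero_im] at a b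
    rw [a, b, h2] at hx
    norm_num at hx
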